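/- arXiv:1812.07785 — 5 statements merged into one kernel-verified Lean document; each statement's English description precedes it below -/
import Mathlib

section
/- Let ω = (q_n)_{n≥1} be a sequence with δ-lower bound (q_n ≥ δ > 0 for all n) and 0 < q_n < 1. Then for every k ≥ 0 and any two distinct strings s, t ∈ {0,1}^{k+1}, the distance between the intervals I_{k+1}(s) and I_{k+1}(t) is at least 2δ·ℓ_{k+1}; equivalently, every connected component of [0,1] ∖ E_{k+1}(ω) has length at least 2δ·ℓ_{k+1}. -/
open Set Filter

/-- `ℓ_k = 2^{-k} ∏_{j=1}^k (1 - q_j)` (here `q` is 0-indexed: `q 0` is `q_1`). -/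
noncomputable def cantorLen (q : ℕ → ℝ) (k : ℕ) : ℝ :=
  (∏ j ∈ Finset.range k, (1 - q j)) / 2 ^ k

/-- Left endpoint `a_k(s) = ∑_{j=1}^k s_j (ℓ_{j-1} - ℓ_j)` of the interval `I_k(s)`. -/
noncomputable def cantorPt (q : ℕ → ℝ) {k : ℕ} (s : Fin k → Bool) : ℝ :=
  ∑ j : Fin k, if s j then cantorLen q j - cantorLen q (j + 1) else 0

/-- The level-`k` closed interval `I_k(s) = [a_k(s), a_k(s) + ℓ_k]`. -/
noncomputable def cantorInterval (q : ℕ → ℝ) {k : ℕ} (s : Fin k → Bool) : Set ℝ :=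
  Icc (cantorPt q s) (cantorPt q s + cantorLen q k)

/-- The level-`k` set `E_k(ω) = ⋃_{s ∈ {0,1}^k} I_k(s)`. -/
noncomputable def cantorLevel (q : ℕ → ℝ) (k : ℕ) : Set ℝ :=
  ⋃ s : Fin k → Bool, cantorInterval q s

/-- The random Cantor set `E(ω) = ⋂_k E_k(ω)`. -/
noncomputable def randomCantorSet (q : ℕ → ℝ) : Set ℝ :=
  ⋂ k : ℕ, cantorLevel q k

lemma cantorLen_pos' (q : ℕ → ℝ) (hq : ∀ n, q n < 1) (k : ℕ) : 0 < cantorLen q k := by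
  unfold cantorLen
  have : 0 < ∏ j ∈ Finset.range k, (1 - q j) :=
    Finset.prod_pos fun j _ => by linarith [hq j]
  positivity

lemma cantorLen_succ' (q : ℕ → ℝ) (k : ℕ) :
    2 * cantorLen q (k + 1) = cantorLen q k * (1 - q k) := by
  unfold cantorLen
  rw [Finset.prod_range_succ, pow_succ]
  field_simp

lemma cantorPt_succ' (q : ℕ → ℝ) (k : ℕ) (s : Fin (k + 1) → Bool) :
    cantorPt q s = cantorPt q (fun j : Fin k => s j.castSucc) +
      if s (Fin.last k) then cantorLen q k - cantorLen q (k + 1) else 0 := by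
  unfold cantorPt
  rw [Fin.sum_univ_castSucc]
  simp

lemma cantor_gap_aux (q : ℕ → ℝ) (δ : ℝ) (hδ : 0 < δ) (hq : ∀ n, δ ≤ q n ∧ q n < 1) (k : ℕ) :
    ∀ s t : Fin k → Bool, s ≠ t → ∀ x ∈ cantorInterval q s, ∀ y ∈ cantorInterval q t,
      2 * δ * cantorLen q k ≤ |x - y| := by
  induction k with
  | zero => intro s t hst; exact absurd (Subsingleton.elim s t) hst
  | succ k ih =>
    intro s t hst x hx y hy
    have h0 := cantorLen_pos' q (fun n => (hq n).2) k
    have h1 := cantorLen_pos' q (fun n => (hq n).2) (k + 1)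
    have h2 := cantorLen_succ' q k
    obtain ⟨hq1, hq2⟩ := hq k
    have h3 : δ * cantorLen q k ≤ q k * cantorLen q k :=
      mul_le_mul_of_nonneg_right hq1 h0.le
    have h4 : 2 * cantorLen q (k + 1) ≤ cantorLen q k := by nlinarith
    have h5 : δ * (2 * cantorLen q (k + 1)) ≤ δ * cantorLen q k :=
      mul_le_mul_of_nonneg_left h4 hδ.le
    have h6 : 0 < δ * cantorLen q k := mul_pos hδ h0
    simp only [cantorInterval, mem_Icc] at hx hy
    rw [cantorPt_succ'] at hx hy
    by_cases h : (fun j : Fin k => s j.castSucc) = (fun j : Fin k => t j.castSucc)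
    · have hl : s (Fin.last k) ≠ t (Fin.last k) := by
        intro hl
        apply hst
        funext j
        refine Fin.lastCases hl (fun i => congrFun h i) j
      rw [h] at hx
      rcases hs : s (Fin.last k) <;> rcases ht : t (Fin.last k) <;>
        simp only [hs, ht, ne_eq, not_true_eq_false, if_true, Bool.false_eq_true, if_false] at hl hx hy
      · rw [abs_sub_comm]
        refine le_trans ?_ (le_abs_self _)
        linarith [hx.2, hy.1]
      · refine le_trans ?_ (le_abs_self _)
        linarith [hx.1, hy.2]
    · have := ih _ _ h x ?_ y ?_
      · linarith
      · refine ⟨?_, ?_⟩ <;> split_ifs at hx <;> linarith [hx.1, hx.2]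
      · refine ⟨?_, ?_⟩ <;> split_ifs at hy <;> linarith [hy.1, hy.2]

/-- If ω has δ-lower bound (q_n ≥ δ > 0), then for every k ≥ 0 and any two
distinct strings s, t ∈ {0,1}^{k+1}, the distance between the intervals I_{k+1}(s) and
I_{k+1}(t) is at least 2δ·ℓ_{k+1}. -/
theorem cantorIntervals_gap_of_lowerBound
    (q : ℕ → ℝ) (δ : ℝ) (hδ : 0 < δ) (hq : ∀ n, δ ≤ q n ∧ q n < 1) (k : ℕ)
    (s t : Fin (k + 1) → Bool) (hst : s ≠ t) :
    ∀ x ∈ cantorInterval q s, ∀ y ∈ cantorInterval q t,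
      2 * δ * cantorLen q (k + 1) ≤ |x - y| := by
  exact cantor_gap_aux q δ hδ hq (k + 1) s t hst
end

section
/- Let ω = (q_n)_{n≥1} be a sequence with δ-lower bound (q_n ≥ δ > 0 for all n) and 0 < q_n < 1. For k ≥ 1 and s ∈ {0,1}^k, let D_k(s) ⊂ ℂ be the closed disk centered at the real point a_k(s) + ℓ_k/2 with radius (1/2)(1+δ)ℓ_k, and let C_k(s) = ∂D_k(s) be its boundary circle. Then: (i) for each fixed k, the disks D_k(s), s ∈ {0,1}^k, are pairwise disjoint; (ii) for each s ∈ {0,1}^k and i ∈ {0,1}, D_{k+1}(s⌢i) is contained in the open disk interior of D_k(s); consequently the circles C_k(s), taken over all k ≥ 1 and all s ∈ {0,1}^k, are pairwise disjoint, and each circle C_k(s) is disjoint from E(ω). -/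
open Set Filter

/-- The closed disk D_k(s) ⊂ ℂ centered at the real midpoint of I_k(s) with radius
(1/2)(1+δ)ℓ_k. -/
noncomputable def cantorDisk (q : ℕ → ℝ) (δ : ℝ) {k : ℕ} (s : Fin k → Bool) : Set ℂ :=
  Metric.closedBall ((cantorPt q s + cantorLen q k / 2 : ℝ) : ℂ) ((1 + δ) / 2 * cantorLen q k)

/-- The boundary circle C_k(s) = ∂D_k(s). -/
noncomputable def cantorCircle (q : ℕ → ℝ) (δ : ℝ) {k : ℕ} (s : Fin k → Bool) : Set ℂ :=
  Metric.sphere ((cantorPt q s + cantorLen q k / 2 : ℝ) : ℂ) ((1 + δ) / 2 * cantorLen q k)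

theorem aux_len_pos (q : ℕ → ℝ) (hq1 : ∀ n, q n < 1) (k : ℕ) : 0 < cantorLen q k := by
  unfold cantorLen
  apply div_pos
  · exact Finset.prod_pos fun j _ => by linarith [hq1 j]
  · positivity

theorem aux_len_succ (q : ℕ → ℝ) (k : ℕ) :
    2 * cantorLen q (k + 1) = (1 - q k) * cantorLen q k := by
  unfold cantorLen
  rw [Finset.prod_range_succ, pow_succ]
  field_simp

theorem aux_pt_snoc (q : ℕ → ℝ) {k : ℕ} (s : Fin k → Bool) (i : Bool) :
    cantorPt q (Fin.snoc s i : Fin (k + 1) → Bool) =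
      cantorPt q s + if i then cantorLen q k - cantorLen q (k + 1) else 0 := by
  unfold cantorPt
  rw [Fin.sum_univ_castSucc]
  simp

/-- The open disk inside `D_k(s)`. -/
noncomputable def auxBall (q : ℕ → ℝ) (δ : ℝ) {k : ℕ} (s : Fin k → Bool) : Set ℂ :=
  Metric.ball ((cantorPt q s + cantorLen q k / 2 : ℝ) : ℂ) ((1 + δ) / 2 * cantorLen q k)

theorem aux_nest (q : ℕ → ℝ) (δ : ℝ) (hδ : 0 < δ) (hq : ∀ n, δ ≤ q n ∧ q n < 1)
    {k : ℕ} (s : Fin k → Bool) (i : Bool) :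
    cantorDisk q δ (Fin.snoc s i : Fin (k + 1) → Bool) ⊆ auxBall q δ s := by
  unfold cantorDisk auxBall
  apply Metric.closedBall_subset_ball'
  have h1 := aux_len_pos q (fun n => (hq n).2) k
  have h3 := aux_len_succ q k
  have h4 : 2 * cantorLen q (k + 1) < cantorLen q k := by
    rw [h3]; nlinarith [mul_pos (lt_of_lt_of_le hδ (hq k).1) h1]
  have h2 := aux_len_pos q (fun n => (hq n).2) (k + 1)
  have hd : dist ((cantorPt q (Fin.snoc s i : Fin (k + 1) → Bool) + cantorLen q (k + 1) / 2 : ℝ) : ℂ)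
      ((cantorPt q s + cantorLen q k / 2 : ℝ) : ℂ) ≤ (cantorLen q k - cantorLen q (k + 1)) / 2 := by
    rw [Complex.isometry_ofReal.dist_eq, aux_pt_snoc, Real.dist_eq, abs_le]
    cases i <;> simp <;> constructor <;> linarith
  nlinarith

theorem aux_sib (q : ℕ → ℝ) (δ : ℝ) (hδ : 0 < δ) (hq : ∀ n, δ ≤ q n ∧ q n < 1)
    {k : ℕ} (s : Fin k → Bool) :
    Disjoint (cantorDisk q δ (Fin.snoc s false : Fin (k + 1) → Bool))
      (cantorDisk q δ (Fin.snoc s true : Fin (k + 1) → Bool)) := by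
  unfold cantorDisk
  apply Metric.closedBall_disjoint_closedBall
  have h1 := aux_len_pos q (fun n => (hq n).2) k
  have h3 := aux_len_succ q k
  have h2 := aux_len_pos q (fun n => (hq n).2) (k + 1)
  have hk := hq k
  rw [Complex.isometry_ofReal.dist_eq, aux_pt_snoc, aux_pt_snoc, Real.dist_eq, abs_sub_comm]
  refine lt_of_lt_of_le ?_ (le_abs_self _)
  simp
  have h5 : 2 * cantorLen q (k + 1) ≤ (1 - δ) * cantorLen q k := by
    rw [h3]; nlinarith [hk.1]
  have h6 : (2 + δ) * (2 * cantorLen q (k + 1)) ≤ (2 + δ) * ((1 - δ) * cantorLen q k) :=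
    mul_le_mul_of_nonneg_left h5 (by linarith)
  nlinarith [mul_pos hδ h1, mul_pos (mul_pos hδ hδ) h1]

theorem aux_ball_sub (q : ℕ → ℝ) (δ : ℝ) {k : ℕ} (s : Fin k → Bool) :
    auxBall q δ s ⊆ cantorDisk q δ s := Metric.ball_subset_closedBall

theorem aux_disj (q : ℕ → ℝ) (δ : ℝ) (hδ : 0 < δ) (hq : ∀ n, δ ≤ q n ∧ q n < 1)
    (k : ℕ) : ∀ s t : Fin k → Bool, s ≠ t →
      Disjoint (cantorDisk q δ s) (cantorDisk q δ t) := by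
  induction k with
  | zero => intro s t h; exact absurd (Subsingleton.elim s t) h
  | succ k ih =>
    intro s t h
    obtain ⟨s0, i, rfl⟩ : ∃ (s0 : Fin k → Bool) (i : Bool), s = Fin.snoc s0 i :=
      ⟨Fin.init s, s (Fin.last k), (Fin.snoc_init_self s).symm⟩
    obtain ⟨t0, j, rfl⟩ : ∃ (t0 : Fin k → Bool) (j : Bool), t = Fin.snoc t0 j :=
      ⟨Fin.init t, t (Fin.last k), (Fin.snoc_init_self t).symm⟩
    by_cases hst : s0 = t0
    · subst hst
      cases i <;> cases j
      · exact absurd rfl h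
      · exact aux_sib q δ hδ hq s0
      · exact (aux_sib q δ hδ hq s0).symm
      · exact absurd rfl h
    · exact (ih s0 t0 hst).mono
        ((aux_nest q δ hδ hq s0 i).trans (aux_ball_sub q δ s0))
        ((aux_nest q δ hδ hq t0 j).trans (aux_ball_sub q δ t0))

theorem aux_anc (q : ℕ → ℝ) (δ : ℝ) (hδ : 0 < δ) (hq : ∀ n, δ ≤ q n ∧ q n < 1)
    (k d : ℕ) : ∀ s : Fin (k + d + 1) → Bool, ∃ t : Fin k → Bool,
      cantorDisk q δ s ⊆ auxBall q δ t := by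
  induction d with
  | zero =>
    intro s
    refine ⟨Fin.init s, ?_⟩
    have := aux_nest q δ hδ hq (Fin.init s) (s (Fin.last k))
    rwa [Fin.snoc_init_self] at this
  | succ d ih =>
    intro s
    obtain ⟨t, ht⟩ := ih (Fin.init s)
    refine ⟨t, ?_⟩
    have := aux_nest q δ hδ hq (Fin.init s) (s (Fin.last _))
    rw [Fin.snoc_init_self] at this
    exact this.trans ((aux_ball_sub q δ _).trans ht)

theorem aux_circle_disk (q : ℕ → ℝ) (δ : ℝ) (hδ : 0 < δ) (hq : ∀ n, δ ≤ q n ∧ q n < 1)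
    {k k' : ℕ} (hk : k < k') (s : Fin k → Bool) (s' : Fin k' → Bool) :
    Disjoint (cantorCircle q δ s) (cantorDisk q δ s') := by
  obtain ⟨d, rfl⟩ : ∃ d, k' = k + d + 1 := ⟨k' - k - 1, by omega⟩
  obtain ⟨t, ht⟩ := aux_anc q δ hδ hq k d s'
  by_cases hst : s = t
  · subst hst
    exact Metric.sphere_disjoint_ball.mono_right ht
  · exact (aux_disj q δ hδ hq k s t hst).mono Metric.sphere_subset_closedBall
      (ht.trans (aux_ball_sub q δ t))

/-- For ω with δ-lower bound: (i) for each fixed k ≥ 1 the disks D_k(s) are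
pairwise disjoint; (ii) each child disk D_{k+1}(s⌢i) is contained in the open interior of
D_k(s); consequently the circles C_k(s), over all k ≥ 1 and s ∈ {0,1}^k, are pairwise
disjoint, and each circle is disjoint from E(ω) ⊂ ℝ ⊂ ℂ. -/
theorem cantorDisks_disjoint_nested_circles
    (q : ℕ → ℝ) (δ : ℝ) (hδ : 0 < δ) (hq : ∀ n, δ ≤ q n ∧ q n < 1) :
    (∀ k : ℕ, 1 ≤ k → ∀ s t : Fin k → Bool, s ≠ t →
        Disjoint (cantorDisk q δ s) (cantorDisk q δ t)) ∧
      (∀ (k : ℕ), 1 ≤ k → ∀ (s : Fin k → Bool) (i : Bool),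
        cantorDisk q δ (Fin.snoc s i) ⊆
          Metric.ball ((cantorPt q s + cantorLen q k / 2 : ℝ) : ℂ)
            ((1 + δ) / 2 * cantorLen q k)) ∧
      (∀ (k k' : ℕ) (s : Fin k → Bool) (s' : Fin k' → Bool), 1 ≤ k → 1 ≤ k' →
        (⟨k, s⟩ : Σ n : ℕ, Fin n → Bool) ≠ ⟨k', s'⟩ →
        Disjoint (cantorCircle q δ s) (cantorCircle q δ s')) ∧
      (∀ (k : ℕ), 1 ≤ k → ∀ s : Fin k → Bool,
        Disjoint (cantorCircle q δ s) ((fun x : ℝ => (x : ℂ)) '' randomCantorSet q)) := by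
  refine ⟨fun k _ => aux_disj q δ hδ hq k, fun k _ s i => aux_nest q δ hδ hq s i, ?_, ?_⟩
  · intro k k' s s' _ _ hne
    rcases lt_trichotomy k k' with h | h | h
    · exact (aux_circle_disk q δ hδ hq h s s').mono_right Metric.sphere_subset_closedBall
    · subst h
      have hs : s ≠ s' := fun e => hne (by rw [e])
      exact (aux_disj q δ hδ hq k s s' hs).mono Metric.sphere_subset_closedBall
        Metric.sphere_subset_closedBall
    · exact ((aux_circle_disk q δ hδ hq h s' s).mono_right
        Metric.sphere_subset_closedBall).symm
  · intro k _ s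
    rw [Set.disjoint_left]
    rintro _ hz ⟨x, hx, rfl⟩
    obtain ⟨t, ht⟩ := Set.mem_iUnion.1 (Set.mem_iInter.1 hx (k + 1))
    refine Set.disjoint_left.1 (aux_circle_disk q δ hδ hq (Nat.lt_succ_self k) s t) hz ?_
    have h2 := aux_len_pos q (fun n => (hq n).2) (k + 1)
    obtain ⟨ha, hb⟩ := ht
    have hp := mul_pos hδ h2
    unfold cantorDisk
    rw [Metric.mem_closedBall]
    change dist (x : ℂ) _ ≤ _
    rw [Complex.isometry_ofReal.dist_eq, Real.dist_eq, abs_le]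
    constructor <;> linarith
end

section
/- Let ω = (q_n)_{n≥1} and ω̃ = (q̃_n)_{n≥1} be sequences of real numbers with 0 < q_n < 1, 0 < q̃_n < 1, admitting a common δ-lower bound (q_n ≥ δ and q̃_n ≥ δ for all n, for some δ > 0). If lim_{n→∞} log((1 − q̃_n)/(1 − q_n)) = 0, then the Hausdorff dimension of E(ω̃) equals the Hausdorff dimension of E(ω). -/
open Set Filter

/-- partial sums along an infinite address -/
noncomputable def cpre (q : ℕ → ℝ) (x : ℕ → Bool) (k : ℕ) : ℝ :=
  ∑ j ∈ Finset.range k, if x j then cantorLen q j - cantorLen q (j + 1) else 0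

/-- the level-`k` interval along an infinite address -/
noncomputable def cint (q : ℕ → ℝ) (x : ℕ → Bool) (k : ℕ) : Set ℝ :=
  Icc (cpre q x k) (cpre q x k + cantorLen q k)

/-- admissible sequences -/
def Adm (δ : ℝ) (q : ℕ → ℝ) : Prop := 0 < δ ∧ ∀ n, δ ≤ q n ∧ q n < 1

lemma clen_succ (q : ℕ → ℝ) (k : ℕ) :
    cantorLen q (k + 1) = cantorLen q k * ((1 - q k) / 2) := by
  unfold cantorLen
  rw [Finset.prod_range_succ, pow_succ]
  field_simp

lemma clen_pos {δ : ℝ} {q : ℕ → ℝ} (h : Adm δ q) (k : ℕ) : 0 < cantorLen q k := by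
  unfold cantorLen
  have : 0 < ∏ j ∈ Finset.range k, (1 - q j) :=
    Finset.prod_pos fun j _ => by linarith [(h.2 j).2]
  positivity

lemma clen_le {δ : ℝ} {q : ℕ → ℝ} (h : Adm δ q) (k : ℕ) : cantorLen q k ≤ (1 / 2) ^ k := by
  induction k with
  | zero => simp [cantorLen]
  | succ k ih =>
    rw [clen_succ, pow_succ]
    have := h.2 k
    have := h.1
    have := clen_pos h k
    apply mul_le_mul ih <;> first | positivity | linarith

lemma clen_gap {δ : ℝ} {q : ℕ → ℝ} (h : Adm δ q) (k : ℕ) :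
    δ * cantorLen q k ≤ cantorLen q k - 2 * cantorLen q (k + 1) := by
  rw [clen_succ]
  nlinarith [clen_pos h k, (h.2 k).1]

lemma cpre_succ (q : ℕ → ℝ) (x : ℕ → Bool) (k : ℕ) : cpre q x (k + 1) = cpre q x k +
    if x k then cantorLen q k - cantorLen q (k + 1) else 0 := by
  simp [cpre, Finset.sum_range_succ]

lemma cpre_congr (q : ℕ → ℝ) {x y : ℕ → Bool} {k : ℕ} (h : ∀ j < k, x j = y j) :
    cpre q x k = cpre q y k := by
  unfold cpre
  refine Finset.sum_congr rfl fun j hj => ?_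
  rw [h j (Finset.mem_range.1 hj)]

lemma cint_anti {δ : ℝ} {q : ℕ → ℝ} (h : Adm δ q) (x : ℕ → Bool) : Antitone (cint q x) := by
  refine antitone_nat_of_succ_le fun k => ?_
  unfold cint
  have h1 := clen_gap h k
  have h2 := clen_pos h k
  have h3 := clen_pos h (k + 1)
  have h4 := mul_pos h.1 h2
  rw [cpre_succ]
  apply Icc_subset_Icc <;> split_ifs <;> linarith

lemma cint_sep {δ : ℝ} {q : ℕ → ℝ} (h : Adm δ q) {x y : ℕ → Bool} {k n : ℕ} (hn : n < k)
    (hxy : ∀ j < n, x j = y j) (hne : x n ≠ y n) {u v : ℝ} (hu : u ∈ cint q x k)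
    (hv : v ∈ cint q y k) : δ * cantorLen q n ≤ |u - v| := by
  replace hu := cint_anti h x (Nat.succ_le_of_lt hn) hu
  replace hv := cint_anti h y (Nat.succ_le_of_lt hn) hv
  simp only [cint, Nat.succ_eq_add_one, mem_Icc, cpre_succ, cpre_congr q hxy] at hu hv
  have h1 := clen_gap h n
  rw [le_abs]
  cases hx : x n <;> cases hy : y n <;> simp [hx, hy] at hne hu hv
  · right; linarith
  · left; linarith

lemma cint_dist {q : ℕ → ℝ} {x y : ℕ → Bool} {n : ℕ}
    (hxy : ∀ j < n, x j = y j) {u v : ℝ} (hu : u ∈ cint q x n)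
    (hv : v ∈ cint q y n) : |u - v| ≤ cantorLen q n := by
  simp only [cint, mem_Icc, cpre_congr q hxy] at hu hv
  rw [abs_le]
  constructor <;> linarith

lemma cint_uniq {δ : ℝ} {q : ℕ → ℝ} (h : Adm δ q) {x y : ℕ → Bool} {k : ℕ} {u : ℝ}
    (hu : u ∈ cint q x k) (hv : u ∈ cint q y k) : ∀ j < k, x j = y j := by
  intro j
  induction j using Nat.strong_induction_on with
  | _ j ih =>
    intro hj
    by_contra hne
    have := cint_sep h hj (fun i hi => ih i hi (hi.trans hj)) hne hu hv
    have := mul_pos h.1 (clen_pos h j)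
    simp at *
    linarith

lemma mem_level_iff (q : ℕ → ℝ) (k : ℕ) (u : ℝ) :
    u ∈ cantorLevel q k ↔ ∃ x : ℕ → Bool, u ∈ cint q x k := by
  have key : ∀ x : ℕ → Bool, cpre q x k = cantorPt q (fun j : Fin k => x j) := by
    intro x
    unfold cpre cantorPt
    rw [Finset.sum_range]
  unfold cantorLevel cantorInterval cint
  rw [mem_iUnion]
  constructor
  · rintro ⟨s, hs⟩
    refine ⟨fun j => if hj : j < k then s ⟨j, hj⟩ else false, ?_⟩
    rw [key]
    simpa using hs
  · rintro ⟨x, hx⟩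
    refine ⟨fun j => x j, ?_⟩
    rwa [← key]

lemma exists_addr {δ : ℝ} {q : ℕ → ℝ} (h : Adm δ q) {u : ℝ} (hu : u ∈ randomCantorSet q) :
    ∃ x : ℕ → Bool, ∀ k, u ∈ cint q x k := by
  have : ∀ k, ∃ x : ℕ → Bool, u ∈ cint q x k := fun k =>
    (mem_level_iff q k u).1 (mem_iInter.1 hu k)
  choose s hs using this
  refine ⟨fun j => s (j + 1) j, fun k => ?_⟩
  have : cpre q (fun j => s (j + 1) j) k = cpre q (s k) k := by
    apply cpre_congr
    intro j hj
    exact cint_uniq h (hs (j + 1)) (cint_anti h _ (Nat.succ_le_of_lt hj) (hs k)) j (Nat.lt_succ_self j)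
  unfold cint
  rw [this]
  exact hs k

lemma exists_pt {δ : ℝ} {q : ℕ → ℝ} (h : Adm δ q) (x : ℕ → Bool) :
    ∃ u, ∀ k, u ∈ cint q x k := by
  have := ciSup_mem_iInter_Icc_of_antitone_Icc (f := cpre q x)
    (g := fun k => cpre q x k + cantorLen q k) (cint_anti h x)
    (fun k => by linarith [clen_pos h k])
  exact ⟨_, fun k => mem_iInter.1 this k⟩

lemma clen_compare {δ : ℝ} {q qt : ℕ → ℝ} (h : Adm δ q) (ht : Adm δ qt)
    (hlim : Tendsto (fun n => Real.log ((1 - qt n) / (1 - q n))) atTop (nhds 0))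
    {r : ℝ} (hr0 : 0 < r) (hr1 : r < 1) :
    ∃ K : ℝ, 0 ≤ K ∧ ∀ n, cantorLen qt n ≤ K * cantorLen q n ^ r := by
  have hev := hlim.eventually_lt_const
    (show (0 : ℝ) < (1 - r) * Real.log 2 from mul_pos (by linarith) (Real.log_pos (by norm_num)))
  obtain ⟨N, hN⟩ := eventually_atTop.1 hev
  have step : ∀ n ≥ N, (1 - qt n) / 2 ≤ ((1 - q n) / 2) ^ r := by
    intro n hn
    have h1 : 0 < 1 - qt n := by linarith [(ht.2 n).2]
    have h2 : 0 < 1 - q n := by linarith [(h.2 n).2]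
    have h3 := hN n hn
    rw [Real.log_div h1.ne' h2.ne'] at h3
    have h4 : Real.log (1 - q n) ≤ 0 := Real.log_nonpos h2.le (by linarith [(h.2 n).1, h.1])
    rw [← Real.log_le_log_iff (by positivity) (by positivity), Real.log_rpow (by positivity),
      Real.log_div h1.ne' (by norm_num), Real.log_div h2.ne' (by norm_num)]
    nlinarith
  have hp : ∀ n, 0 < cantorLen q n ^ r := fun n => Real.rpow_pos_of_pos (clen_pos h n) r
  have hpos : ∀ n, 0 ≤ cantorLen qt n / cantorLen q n ^ r := fun n =>
    (div_pos (clen_pos ht n) (hp n)).le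
  refine ⟨∑ i ∈ Finset.range (N + 1), cantorLen qt i / cantorLen q i ^ r,
    Finset.sum_nonneg fun i _ => hpos i, fun n => ?_⟩
  have small : ∀ n ≤ N, cantorLen qt n ≤
      (∑ i ∈ Finset.range (N + 1), cantorLen qt i / cantorLen q i ^ r) * cantorLen q n ^ r := by
    intro n hn
    rw [← div_le_iff₀ (hp n)]
    exact Finset.single_le_sum (f := fun i => cantorLen qt i / cantorLen q i ^ r)
      (fun i _ => hpos i) (Finset.mem_range.2 (by omega))
  rcases le_total n N with hn | hn
  · exact small n hn
  · induction n, hn using Nat.le_induction with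
    | base => exact small N le_rfl
    | succ n hn ih =>
      have h2 : 0 < 1 - q n := by linarith [(h.2 n).2]
      have h1 : 0 < 1 - qt n := by linarith [(ht.2 n).2]
      rw [clen_succ, clen_succ, Real.mul_rpow (clen_pos h n).le (by positivity), ← mul_assoc]
      exact mul_le_mul ih (step n hn) (by positivity)
        (mul_nonneg (Finset.sum_nonneg fun i _ => hpos i) (hp n).le)

lemma dim_le_div {δ : ℝ} {q qt : ℕ → ℝ} (h : Adm δ q) (ht : Adm δ qt)
    (hlim : Tendsto (fun n => Real.log ((1 - qt n) / (1 - q n))) atTop (nhds 0))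
    {r : NNReal} (hr0 : 0 < r) (hr1 : r < 1) :
    dimH (randomCantorSet qt) ≤ dimH (randomCantorSet q) / r := by
  obtain ⟨K, hK0, hK⟩ := clen_compare h ht hlim (r := r) (by exact_mod_cast hr0)
    (by exact_mod_cast hr1)
  have hx : ∀ u : ℝ, ∃ x : ℕ → Bool, u ∈ randomCantorSet q → ∀ k, u ∈ cint q x k := by
    intro u
    by_cases hu : u ∈ randomCantorSet q
    · obtain ⟨x, hx⟩ := exists_addr h hu
      exact ⟨x, fun _ => hx⟩
    · exact ⟨fun _ => false, fun h => absurd h hu⟩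
  choose X hX using hx
  choose G hG using exists_pt ht
  have hsub : randomCantorSet qt ⊆ (fun u => G (X u)) '' randomCantorSet q := by
    intro v hv
    obtain ⟨y, hy⟩ := exists_addr ht hv
    obtain ⟨u, hu⟩ := exists_pt h y
    have huE : u ∈ randomCantorSet q :=
      mem_iInter.2 fun k => (mem_level_iff q k u).2 ⟨y, hu k⟩
    refine ⟨u, huE, ?_⟩
    have hxy : X u = y := by
      funext j
      exact cint_uniq h (hX u huE (j + 1)) (hu (j + 1)) j (Nat.lt_succ_self j)
    simp only [hxy]
    have hd : ∀ k : ℕ, |G y - v| ≤ (1 / 2 : ℝ) ^ k := fun k =>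
      (cint_dist (fun _ _ => rfl) (hG y k) (hy k)).trans (clen_le ht k)
    have h0 : |G y - v| ≤ 0 := ge_of_tendsto'
      (tendsto_pow_atTop_nhds_zero_of_lt_one (by norm_num) (by norm_num)) hd
    have := abs_nonpos_iff.1 h0
    linarith
  have hδ := h.1
  have hC : 0 ≤ K * (δ⁻¹) ^ (r : ℝ) := by positivity
  have hhol : HolderOnWith (Real.toNNReal (K * (δ⁻¹) ^ (r : ℝ))) r (fun u => G (X u))
      (randomCantorSet q) := by
    intro u hu v hv
    have main : |G (X u) - G (X v)| ≤ K * (δ⁻¹) ^ (r : ℝ) * |u - v| ^ (r : ℝ) := by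
      by_cases hxy : X u = X v
      · rw [hxy]; simp only [sub_self, abs_zero]; positivity
      · have hex : ∃ n, X u n ≠ X v n := Function.ne_iff.1 hxy
        classical
        have hne := Nat.find_spec hex
        have hlt : ∀ j < Nat.find hex, X u j = X v j := fun j hj =>
          not_not.1 (Nat.find_min hex hj)
        generalize Nat.find hex = n at hne hlt
        have h1 := cint_sep h (Nat.lt_succ_self n) hlt hne (hX u hu _) (hX v hv _)
        have h2 := cint_dist hlt (hG (X u) n) (hG (X v) n)
        have h3 : cantorLen q n ≤ δ⁻¹ * |u - v| := by
          rw [inv_mul_eq_div, le_div_iff₀ hδ]; linarith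
        calc _ ≤ K * cantorLen q n ^ (r : ℝ) := h2.trans (hK n)
          _ ≤ K * (δ⁻¹ * |u - v|) ^ (r : ℝ) := by
            gcongr
            exact (clen_pos h n).le
          _ = _ := by rw [Real.mul_rpow (by positivity) (abs_nonneg _), mul_assoc]
    rw [edist_dist, edist_dist, Real.dist_eq, Real.dist_eq,
      ENNReal.ofReal_rpow_of_nonneg (abs_nonneg _) (NNReal.coe_nonneg r)]
    change _ ≤ ENNReal.ofReal _ * _
    rw [← ENNReal.ofReal_mul hC]
    exact ENNReal.ofReal_le_ofReal main
  exact (dimH_mono hsub).trans (hhol.dimH_image_le hr0)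

lemma dim_le {δ : ℝ} {q qt : ℕ → ℝ} (h : Adm δ q) (ht : Adm δ qt)
    (hlim : Tendsto (fun n => Real.log ((1 - qt n) / (1 - q n))) atTop (nhds 0)) :
    dimH (randomCantorSet qt) ≤ dimH (randomCantorSet q) := by
  refine ENNReal.le_of_forall_nnreal_lt fun s hs => ?_
  rcases eq_or_ne s 0 with rfl | hs0
  · simp
  by_contra hlt
  push Not at hlt
  obtain ⟨d, hd⟩ : ∃ d : NNReal, (d : ENNReal) = dimH (randomCantorSet q) :=
    ⟨_, ENNReal.coe_toNNReal (ne_top_of_lt hlt)⟩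
  rw [← hd] at hlt
  have hds : d < s := by exact_mod_cast hlt
  obtain ⟨m, hdm, hms⟩ := exists_between hds
  have hm0 : 0 < m := lt_of_le_of_lt (zero_le) hdm
  have hspos : 0 < s := hm0.trans hms
  have h1 := dim_le_div h ht hlim (r := m / s) (div_pos hm0 hspos) ((div_lt_one hspos).2 hms)
  rw [← hd, ← ENNReal.coe_div (div_pos hm0 hspos).ne'] at h1
  have h2 : s < d / (m / s) := by exact_mod_cast hs.trans_le h1
  rw [lt_div_iff₀ (div_pos hm0 hspos), mul_div_cancel₀ _ hs0] at h2
  exact absurd h2 (not_lt.2 hdm.le)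

/-- If ω and ω̃ admit a common δ-lower bound and
lim_{n→∞} log((1 - q̃_n)/(1 - q_n)) = 0, then the Hausdorff dimension of E(ω̃) equals the
Hausdorff dimension of E(ω). -/
theorem dimH_randomCantorSet_eq_of_log_ratio_tendsto_zero
    (q qt : ℕ → ℝ) (δ : ℝ) (hδ : 0 < δ)
    (hq : ∀ n, δ ≤ q n ∧ q n < 1) (hqt : ∀ n, δ ≤ qt n ∧ qt n < 1)
    (hlim : Tendsto (fun n => Real.log ((1 - qt n) / (1 - q n))) atTop (nhds 0)) :
    dimH (randomCantorSet qt) = dimH (randomCantorSet q) := by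
  refine le_antisymm (dim_le ⟨hδ, hq⟩ ⟨hδ, hqt⟩ hlim) (dim_le ⟨hδ, hqt⟩ ⟨hδ, hq⟩ ?_)
  have := hlim.neg
  simp only [neg_zero] at this
  refine this.congr fun n => ?_
  rw [← Real.log_inv, inv_div]
end

section
/- Let 0 < δ < 1 and δ ≤ q̃ ≤ q < 1 be real numbers. Define r = (1/2)(1+δ)(1−q), r̂ = (1/2)(1+δ)(1−q̃) · ((1+δ) + (1−δ)q)/((1+δ) + (1−δ)q̃), and R̃ = r̂ · ((1+δ) − (1−δ)q̃)/((1+δ)(1−q̃)). Then 0 < r ≤ r̂ < R̃, and log( (log R̃ − log r) / (log R̃ − log r̂) ) ≤ ( log((1+δ²)/(1−δ²)) )^{−1} · ( log((1−q̃)/(1−q)) + (q − q̃) ). -/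
/-- With 0 < δ < 1, δ ≤ q̃ ≤ q < 1 and
r = (1/2)(1+δ)(1−q),
r̂ = (1/2)(1+δ)(1−q̃)·((1+δ)+(1−δ)q)/((1+δ)+(1−δ)q̃),
R̃ = r̂·((1+δ)−(1−δ)q̃)/((1+δ)(1−q̃)),
one has 0 < r ≤ r̂ < R̃ and
log((log R̃ − log r)/(log R̃ − log r̂)) ≤
  (log((1+δ²)/(1−δ²)))⁻¹ · (log((1−q̃)/(1−q)) + (q − q̃)). -/
theorem dilatation_estimate_step5
    (δ q qt r rh Rt : ℝ) (hδ0 : 0 < δ) (hδ1 : δ < 1)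
    (h0 : δ ≤ qt) (h1 : qt ≤ q) (h2 : q < 1)
    (hr : r = 1 / 2 * (1 + δ) * (1 - q))
    (hrh : rh = 1 / 2 * (1 + δ) * (1 - qt) * (((1 + δ) + (1 - δ) * q) / ((1 + δ) + (1 - δ) * qt)))
    (hRt : Rt = rh * (((1 + δ) - (1 - δ) * qt) / ((1 + δ) * (1 - qt)))) :
    0 < r ∧ r ≤ rh ∧ rh < Rt ∧
      Real.log ((Real.log Rt - Real.log r) / (Real.log Rt - Real.log rh)) ≤
        (Real.log ((1 + δ ^ 2) / (1 - δ ^ 2)))⁻¹ *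
          (Real.log ((1 - qt) / (1 - q)) + (q - qt)) := by
  have hq1 : 0 < 1 - q := by linarith
  have hp1 : 0 < 1 - qt := by linarith
  have hd1 : 0 < 1 - δ := by linarith
  have hd2 : 0 < 1 + δ := by linarith
  have hp0 : 0 < qt := by linarith
  have hq0 : 0 < q := by linarith
  have hB : 0 < (1 + δ) + (1 - δ) * qt := by positivity
  have hA : 0 < (1 + δ) + (1 - δ) * q := by positivity
  have hBge : 1 ≤ (1 + δ) + (1 - δ) * qt := by nlinarith [mul_pos hd1 hp0]
  have hC : 0 < (1 + δ) * (1 - qt) := by positivity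
  have hK1 : 1 < ((1 + δ) - (1 - δ) * qt) / ((1 + δ) * (1 - qt)) := by
    rw [lt_div_iff₀ hC]; nlinarith [mul_pos hδ0 hp0]
  have hAB : 1 ≤ ((1 + δ) + (1 - δ) * q) / ((1 + δ) + (1 - δ) * qt) := by
    rw [le_div_iff₀ hB]; nlinarith
  have hsq : 0 < 1 - δ ^ 2 := by nlinarith
  have hM1 : 1 < (1 + δ ^ 2) / (1 - δ ^ 2) := by
    rw [lt_div_iff₀ hsq]; nlinarith
  have hMK : (1 + δ ^ 2) / (1 - δ ^ 2) ≤
      ((1 + δ) - (1 - δ) * qt) / ((1 + δ) * (1 - qt)) := by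
    rw [div_le_div_iff₀ hsq hC]
    have h : 0 ≤ (1 + δ) * (2 * δ * (qt - δ)) := by
      have : 0 ≤ qt - δ := by linarith
      positivity
    nlinarith
  have hABle : ((1 + δ) + (1 - δ) * q) / ((1 + δ) + (1 - δ) * qt) - 1 ≤ q - qt := by
    rw [sub_le_iff_le_add, div_le_iff₀ hB]
    nlinarith [mul_nonneg (sub_nonneg.2 h1) (sub_nonneg.2 hBge),
      mul_nonneg (sub_nonneg.2 h1) hδ0.le, mul_nonneg (sub_nonneg.2 h1) hp0.le,
      mul_nonneg (mul_nonneg (sub_nonneg.2 h1) hp0.le) hd1.le]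
  generalize ((1 + δ) + (1 - δ) * q) / ((1 + δ) + (1 - δ) * qt) = T at *
  generalize ((1 + δ) - (1 - δ) * qt) / ((1 + δ) * (1 - qt)) = K at *
  generalize (1 + δ ^ 2) / (1 - δ ^ 2) = M at *
  have hT : 0 < T := by linarith
  have hr0 : 0 < r := by rw [hr]; positivity
  have hrh0 : 0 < rh := by rw [hrh]; positivity
  have hle : r ≤ rh := by
    rw [hr, hrh]
    calc 1 / 2 * (1 + δ) * (1 - q) ≤ 1 / 2 * (1 + δ) * (1 - qt) := by gcongr
      _ ≤ _ := le_mul_of_one_le_right (by positivity) hAB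
  refine ⟨hr0, hle, by rw [hRt]; exact lt_mul_of_one_lt_right hrh0 hK1, ?_⟩
  have hL : 0 < Real.log M := Real.log_pos hM1
  have hLK : Real.log M ≤ Real.log K := Real.log_le_log (by linarith) hMK
  have hK : Real.log Rt = Real.log rh + Real.log K := by
    rw [hRt, Real.log_mul hrh0.ne' (by linarith)]
  have hc : 0 < 1 / 2 * (1 + δ) := by positivity
  have e1 : Real.log r = Real.log (1 / 2 * (1 + δ)) + Real.log (1 - q) := by
    rw [hr, Real.log_mul hc.ne' hq1.ne']
  have e2 : Real.log rh = Real.log (1 / 2 * (1 + δ)) + Real.log (1 - qt) + Real.log T := by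
    rw [hrh, Real.log_mul (mul_pos hc hp1).ne' hT.ne', Real.log_mul hc.ne' hp1.ne']
  have hTl : Real.log T ≤ q - qt := (Real.log_le_sub_one_of_pos hT).trans hABle
  have hmono : Real.log r ≤ Real.log rh := Real.log_le_log hr0 hle
  have hKpos : 0 < Real.log K := by linarith
  have e3 : Real.log Rt - Real.log rh = Real.log K := by linarith
  have e4 : (Real.log Rt - Real.log r) / Real.log K =
      1 + (Real.log rh - Real.log r) / Real.log K := by
    rw [hK]; field_simp; ring
  have hnn : 0 ≤ (Real.log rh - Real.log r) / Real.log K :=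
    div_nonneg (by linarith) hKpos.le
  rw [e3, e4, Real.log_div hp1.ne' hq1.ne']
  calc Real.log (1 + (Real.log rh - Real.log r) / Real.log K)
      ≤ (Real.log rh - Real.log r) / Real.log K := by
        have := Real.log_le_sub_one_of_pos
          (show 0 < 1 + (Real.log rh - Real.log r) / Real.log K by linarith)
        linarith
    _ ≤ (Real.log rh - Real.log r) / Real.log M :=
        div_le_div_of_nonneg_left (by linarith) hL hLK
    _ = (Real.log M)⁻¹ * (Real.log rh - Real.log r) := by rw [div_eq_inv_mul]
    _ ≤ _ := mul_le_mul_of_nonneg_left (by linarith) (inv_pos.2 hL).le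
end

section
/- Let 0 < δ < 1 and δ ≤ q̃ ≤ q < 1 be real numbers. Define x = (1/2)((1+δ) + (1−δ)q) and x̃ = (1/2)((1+δ) + (1−δ)q̃). Then 0 < 1 + δ(1−q) < 1+δ ≤ (1+δ)·x/x̃, and log( ( log((1+δ)·x/x̃) − log(1 + δ(1−q)) ) / ( log(1+δ) − log(1 + δ(1−q)) ) ) ≤ ( log((1+δ)/(1 + δ(1−δ))) )^{−1} · (q − q̃). -/
/-- With 0 < δ < 1, δ ≤ q̃ ≤ q < 1 and
x = (1/2)((1+δ) + (1−δ)q), x̃ = (1/2)((1+δ) + (1−δ)q̃),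
one has 0 < 1 + δ(1−q) < 1+δ ≤ (1+δ)·x/x̃ and
log( (log((1+δ)x/x̃) − log(1 + δ(1−q))) / (log(1+δ) − log(1 + δ(1−q))) ) ≤
  (log((1+δ)/(1 + δ(1−δ))))⁻¹ · (q − q̃). -/
theorem dilatation_estimate_step6
    (δ q qt x xt : ℝ) (hδ0 : 0 < δ) (hδ1 : δ < 1)
    (h0 : δ ≤ qt) (h1 : qt ≤ q) (h2 : q < 1)
    (hx : x = 1 / 2 * ((1 + δ) + (1 - δ) * q))
    (hxt : xt = 1 / 2 * ((1 + δ) + (1 - δ) * qt)) :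
    0 < 1 + δ * (1 - q) ∧ 1 + δ * (1 - q) < 1 + δ ∧ 1 + δ ≤ (1 + δ) * x / xt ∧
      Real.log ((Real.log ((1 + δ) * x / xt) - Real.log (1 + δ * (1 - q))) /
          (Real.log (1 + δ) - Real.log (1 + δ * (1 - q)))) ≤
        (Real.log ((1 + δ) / (1 + δ * (1 - δ))))⁻¹ * (q - qt) := by
  have hqt0 : 0 < qt := by linarith
  have hxt0 : 0 < xt := by
    have : 0 < (1 - δ) * qt := mul_pos (by linarith) hqt0
    rw [hxt]; linarith
  have hm : 0 ≤ (1 - δ) * (q - qt) := mul_nonneg (by linarith) (by linarith)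
  have hle : xt ≤ x := by rw [hx, hxt]; linarith
  have hx0 : 0 < x := by linarith
  have p1 : 0 < 1 + δ * (1 - q) := by
    have := mul_pos hδ0 (sub_pos.2 h2); linarith
  have p2 : 1 + δ * (1 - q) < 1 + δ := by
    have := mul_pos hδ0 (by linarith : 0 < q); linarith
  have p4 : 1 + δ * (1 - q) ≤ 1 + δ * (1 - δ) := by
    have := mul_nonneg hδ0.le (by linarith : 0 ≤ q - δ); linarith
  have p5 : 1 + δ * (1 - δ) < 1 + δ := by
    have := mul_pos hδ0 hδ0; linarith
  have p3 : 1 + δ ≤ (1 + δ) * x / xt := by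
    rw [le_div_iff₀ hxt0]
    exact mul_le_mul_of_nonneg_left hle (by linarith)
  refine ⟨p1, p2, p3, ?_⟩
  have hL : 0 < Real.log ((1 + δ) / (1 + δ * (1 - δ))) :=
    Real.log_pos ((one_lt_div (by linarith)).2 p5)
  have hB : Real.log ((1 + δ) / (1 + δ * (1 - δ))) ≤
      Real.log (1 + δ) - Real.log (1 + δ * (1 - q)) := by
    rw [Real.log_div (by linarith) (by linarith)]
    have := Real.log_le_log p1 p4
    linarith
  have hA : Real.log ((1 + δ) * x / xt) = Real.log (1 + δ) + Real.log (x / xt) := by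
    rw [mul_div_assoc, Real.log_mul (by linarith) (div_pos hx0 hxt0).ne']
  have hA0 : 0 ≤ Real.log (x / xt) := Real.log_nonneg ((one_le_div hxt0).2 hle)
  have hA1 : Real.log (x / xt) ≤ q - qt := by
    have h := Real.log_le_sub_one_of_pos (div_pos hx0 hxt0)
    have : x / xt ≤ 1 + (q - qt) := by
      rw [div_le_iff₀ hxt0, hx, hxt]
      have a : 0 ≤ (q - qt) * (δ + (1 - δ) * qt / 2) :=
        mul_nonneg (by linarith)
          (add_nonneg hδ0.le (div_nonneg (mul_nonneg (by linarith) hqt0.le) (by norm_num)))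
      nlinarith
    linarith
  rw [hA]
  set B := Real.log (1 + δ) - Real.log (1 + δ * (1 - q)) with hBdef
  have hB0 : 0 < B := lt_of_lt_of_le hL hB
  have e : (Real.log (1 + δ) + Real.log (x / xt) - Real.log (1 + δ * (1 - q))) / B
      = 1 + Real.log (x / xt) / B := by
    rw [eq_comm, eq_div_iff hB0.ne', add_mul, div_mul_cancel₀ _ hB0.ne', hBdef]; ring
  rw [e]
  have hd : 0 ≤ Real.log (x / xt) / B := div_nonneg hA0 hB0.le
  have h := Real.log_le_sub_one_of_pos (by linarith : 0 < 1 + Real.log (x / xt) / B)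
  have h' : Real.log (x / xt) / B ≤ (q - qt) / Real.log ((1 + δ) / (1 + δ * (1 - δ))) :=
    div_le_div₀ (by linarith) hA1 hL hB
  rw [inv_mul_eq_div]
  linarith
end
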